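/- arXiv:1102.4100 — 2 statements merged into one kernel-verified Lean document; each statement's English description precedes it below -/
import Mathlib

section
/- Let k, t, n be integers with k even and 0 < k <= 2t+1 <= n, and let f be any colouring of H_n in the class maj_t(k). Then inst(f) = 2t+1. -/
/-!
Call the points outside both balls the middle region.  There, `f` depends only on the first
`k` entries (`MajClass.congr_middle`): two points agreeing there are both complementary to the
antipode of either.  It follows that `f` is monotone along single flips (`MajClass.mono_step`),
and `f` takes opposite values at antipodal points (`MajClass.antipode`).

*Upper bound.*  By monotonicity, a jump to colour `1` flips an entry from `0` to `1`, and a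
jump to colour `0` flips an entry from `1` to `0`.  At any point of a geodesic, the upward jumps
made so far and the downward jumps still to come account for distinct entries equal to `1`;
likewise for entries equal to `0`.  Jumps alternate in direction and their number `J` is odd, so
both counts are at least `(J - 1) / 2`.  If `J > 2t + 1`, the whole geodesic therefore lies in the
middle region, where only flips of the first `k` entries can be jumps, so `J ≤ k ≤ 2t + 1`, a
contradiction.

*Lower bound.*  Start with ones exactly at the odd positions below `2t + 1` and flip the entries in
increasing order.  The first `2t + 1` steps go alternately up and down between `t` and `t + 1` ones.
The points with `t` ones have colour `0`.  Those with `t + 1` ones reached before time `k` have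
`k / 2 + 1` ones among the first `k` entries, so they have colour `1`.  The later ones share a
balanced pattern on the first `k` entries; exchanging positions `2i` and `2i + 1` for `2i < k`
replaces this pattern by its complement, so for one of the two versions these points also have
colour `1`, and each of the `2t + 1` steps is a jump.
-/


open Finset

/-- The number of entries of a point of the hypercube equal to `1` (`true`). -/
def onesCount {n : ℕ} (x : Fin n → Bool) : ℕ :=
  (univ.filter fun i => x i = true).card

/-- The number of entries of a point of the hypercube equal to `0` (`false`). -/
def zerosCount {n : ℕ} (x : Fin n → Bool) : ℕ :=
  (univ.filter fun i => x i = false).card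

/-- `P` is a geodesic in the `n`-hypercube: consecutive points differ in exactly one
entry, and each of the `n` entries changes at exactly one step. -/
def IsGeodesic {n : ℕ} (P : Fin (n+1) → Fin n → Bool) : Prop :=
  ∃ σ : Equiv.Perm (Fin n), ∀ j : Fin n, ∀ ℓ : Fin n,
    P j.succ ℓ = if σ ℓ = j then !(P j.castSucc ℓ) else P j.castSucc ℓ

/-- The number of jumps of the geodesic `P` in the colouring `f`. -/
def jumps {n : ℕ} (f : (Fin n → Bool) → Bool) (P : Fin (n+1) → Fin n → Bool) : ℕ :=
  (univ.filter fun j : Fin n => f (P j.succ) ≠ f (P j.castSucc)).card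

/-- `inst f` is the maximum of `jumps f P` over all geodesics `P`. -/
noncomputable def inst {n : ℕ} (f : (Fin n → Bool) → Bool) : ℕ :=
  sSup {m | ∃ P : Fin (n+1) → Fin n → Bool, IsGeodesic P ∧ m = jumps f P}

/-- The number of `1`s among the first `k` entries of `x`. -/
def firstOnes {n : ℕ} (k : ℕ) (x : Fin n → Bool) : ℕ :=
  (univ.filter fun i : Fin n => i.val < k ∧ x i = true).card

/-- `f` belongs to the class `maj_t(k)` for even `k`: canonical on the balls, the strict
majority colour of the first `k` entries outside the balls, and opposite colours on
points (outside the balls) whose first `k` entries are complementary. -/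
def MajClass {n : ℕ} (t k : ℕ) (f : (Fin n → Bool) → Bool) : Prop :=
  (∀ x, onesCount x ≤ t → f x = false) ∧
  (∀ x, zerosCount x ≤ t → f x = true) ∧
  (∀ x, ¬ onesCount x ≤ t → ¬ zerosCount x ≤ t →
    (k < 2 * firstOnes k x → f x = true) ∧ (2 * firstOnes k x < k → f x = false)) ∧
  (∀ x y, ¬ onesCount x ≤ t → ¬ zerosCount x ≤ t → ¬ onesCount y ≤ t →
    ¬ zerosCount y ≤ t → (∀ i : Fin n, i.val < k → x i = !(y i)) → f x ≠ f y)

/-! ### Structure of the colourings in the class -/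

section Structure

variable {n t k : ℕ} {f : (Fin n → Bool) → Bool}

lemma onesCount_not (x : Fin n → Bool) : onesCount (fun i => !(x i)) = zerosCount x := by
  simp [onesCount, zerosCount]

lemma zerosCount_not (x : Fin n → Bool) : zerosCount (fun i => !(x i)) = onesCount x := by
  simp [onesCount, zerosCount]

lemma onesCount_add_zerosCount (x : Fin n → Bool) : onesCount x + zerosCount x = n := by
  have h := Finset.card_filter_add_card_filter_not (s := (univ : Finset (Fin n)))
    (fun i => x i = true)
  simpa [onesCount, zerosCount] using h

/-- In the middle region the colour is determined by the first `k` entries. -/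
lemma MajClass.congr_middle (hf : MajClass t k f) {x y : Fin n → Bool}
    (hx1 : ¬ onesCount x ≤ t) (hx0 : ¬ zerosCount x ≤ t)
    (hy1 : ¬ onesCount y ≤ t) (hy0 : ¬ zerosCount y ≤ t)
    (h : ∀ i : Fin n, i.val < k → x i = y i) : f x = f y := by
  obtain ⟨-, -, -, h4⟩ := hf
  have hz1 : ¬ onesCount (fun i => !(x i)) ≤ t := by rwa [onesCount_not]
  have hz0 : ¬ zerosCount (fun i => !(x i)) ≤ t := by rwa [zerosCount_not]
  have h1 := h4 x _ hx1 hx0 hz1 hz0 (fun i _ => by simp)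
  have h2 := h4 y _ hy1 hy0 hz1 hz0 (fun i hi => by simp [h i hi])
  revert h1 h2
  cases f x <;> cases f y <;> cases f (fun i => !(x i)) <;> simp

lemma MajClass.antipode (hf : MajClass t k f) (x : Fin n → Bool) :
    f (fun i => !(x i)) = !(f x) := by
  obtain ⟨h1, h2, -, h4⟩ := hf
  by_cases hx1 : onesCount x ≤ t
  · rw [h1 x hx1, h2 _ (by rwa [zerosCount_not])]; rfl
  by_cases hx0 : zerosCount x ≤ t
  · rw [h2 x hx0, h1 _ (by rwa [onesCount_not])]; rfl
  have := h4 x (fun i => !(x i)) hx1 hx0 (by rwa [onesCount_not]) (by rwa [zerosCount_not])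
    (fun i _ => by simp)
  revert this
  cases f x <;> cases f (fun i => !(x i)) <;> simp

/-- Raising a single entry never changes the colour from `1` to `0`. -/
lemma MajClass.mono_step (hf : MajClass t k f) {x y : Fin n → Bool} {c : Fin n}
    (hxc : x c = false) (hyc : y c = true) (hxy : ∀ i, i ≠ c → y i = x i)
    (hfx : f x = true) : f y = true := by
  have hle : ∀ i, x i = true → y i = true := by
    intro i hi
    by_cases h : i = c
    · rw [h, hyc]
    · rw [hxy i h, hi]
  have ho : onesCount x ≤ onesCount y := by
    apply card_le_card; intro i; simpa using hle i
  have hz : zerosCount y ≤ zerosCount x := by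
    have := onesCount_add_zerosCount x
    have := onesCount_add_zerosCount y
    omega
  have hsub : (univ.filter fun i : Fin n => i.val < k ∧ x i = true) ⊆
      univ.filter fun i : Fin n => i.val < k ∧ y i = true := by
    intro i
    simp only [mem_filter, mem_univ, true_and]
    exact fun h => ⟨h.1, hle i h.2⟩
  have hff := hf
  obtain ⟨h1, h2, h3, -⟩ := hf
  by_cases hx1 : onesCount x ≤ t
  · rw [h1 x hx1] at hfx; simp at hfx
  by_cases hy0 : zerosCount y ≤ t
  · exact h2 y hy0
  have hx0 : ¬ zerosCount x ≤ t := by omega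
  have hy1 : ¬ onesCount y ≤ t := by omega
  by_cases hck : c.val < k
  · have hlt : firstOnes k x < firstOnes k y := by
      apply card_lt_card
      refine ⟨hsub, fun h => ?_⟩
      have : c ∈ univ.filter fun i : Fin n => i.val < k ∧ x i = true := h (by simp [hck, hyc])
      simp [hxc] at this
    by_cases hx : 2 * firstOnes k x < k
    · rw [(h3 x hx1 hx0).2 hx] at hfx; simp at hfx
    · exact (h3 y hy1 hy0).1 (by omega)
  · rw [← hfx]
    refine hff.congr_middle hy1 hy0 hx1 hx0 fun i hi => hxy i ?_
    rintro rfl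
    exact hck hi

end Structure

/-! ### The upper bound -/

lemma card_filter_lt_succ {n : ℕ} (p : Fin n → Prop) [DecidablePred p] (i : Fin n) :
    (univ.filter fun j : Fin n => j.val < i.val + 1 ∧ p j).card =
      (univ.filter fun j : Fin n => j.val < i.val ∧ p j).card + if p i then 1 else 0 := by
  by_cases h : p i
  · have : (univ.filter fun j : Fin n => j.val < i.val + 1 ∧ p j) =
        insert i (univ.filter fun j : Fin n => j.val < i.val ∧ p j) := by
      ext j
      simp only [mem_filter, mem_univ, true_and, mem_insert, Fin.ext_iff]
      constructor
      · rintro ⟨h1, h2⟩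
        by_cases h3 : j.val = i.val
        · exact Or.inl h3
        · exact Or.inr ⟨by omega, h2⟩
      · rintro (h1 | h1)
        · have : j = i := Fin.ext h1
          subst this
          exact ⟨by omega, h⟩
        · exact ⟨by omega, h1.2⟩
    rw [this, card_insert_of_notMem (by simp)]
    simp [h]
  · simp only [h, if_false, add_zero]
    congr 1
    ext j
    simp only [mem_filter, mem_univ, true_and]
    constructor
    · rintro ⟨h1, h2⟩
      have : j.val ≠ i.val := fun h3 => h (Fin.ext h3 ▸ h2)
      exact ⟨by omega, h2⟩
    · exact fun h1 => ⟨by omega, h1.2⟩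

/-- The value of entry `ℓ` at time `i` of a geodesic with flip times `σ`. -/
lemma geodesic_apply {n : ℕ} {P : Fin (n+1) → Fin n → Bool} {σ : Equiv.Perm (Fin n)}
    (hP : ∀ j : Fin n, ∀ ℓ : Fin n,
      P j.succ ℓ = if σ ℓ = j then !(P j.castSucc ℓ) else P j.castSucc ℓ)
    (i : Fin (n+1)) (ℓ : Fin n) :
    P i ℓ = if (σ ℓ).val < i.val then !(P 0 ℓ) else P 0 ℓ := by
  induction i using Fin.induction with
  | zero => simp
  | succ j ih =>
    rw [hP, ih]
    by_cases h : σ ℓ = j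
    · simp [h]
    · have h' : (σ ℓ).val ≠ j.val := fun h3 => h (Fin.ext h3)
      have h2 : (σ ℓ).val < j.val + 1 ↔ (σ ℓ).val < j.val := by omega
      simp [h, h2]

lemma jumps_le {n t k : ℕ} {f : (Fin n → Bool) → Bool} (hk2t : k ≤ 2 * t + 1)
    (hf : MajClass t k f) {P : Fin (n+1) → Fin n → Bool}
    (hG : IsGeodesic P) : jumps f P ≤ 2 * t + 1 := by
  obtain ⟨σ, hP⟩ := hG
  have happ := geodesic_apply hP
  -- `U` and `D` single out the jumps to colour `1` and to colour `0`.
  let U : Fin n → Prop := fun j => f (P j.castSucc) = false ∧ f (P j.succ) = true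
  let D : Fin n → Prop := fun j => f (P j.castSucc) = true ∧ f (P j.succ) = false
  let h : Fin (n+1) → ℕ := fun i => if f (P i) = true then 1 else 0
  have hcast : ∀ j : Fin n, P j.castSucc (σ.symm j) = P 0 (σ.symm j) := by
    intro j; rw [happ]; simp
  have hsucc : ∀ j : Fin n, P j.succ (σ.symm j) = !(P 0 (σ.symm j)) := by
    intro j; rw [happ]; simp
  have hother : ∀ j i : Fin n, i ≠ σ.symm j → P j.succ i = P j.castSucc i := by
    intro j i hi
    rw [hP, if_neg]
    intro h; exact hi (by rw [← h]; simp)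
  have hU : ∀ j, U j → P 0 (σ.symm j) = false := by
    rintro j ⟨h1, h2⟩
    by_contra hc
    rw [Bool.not_eq_false] at hc
    have := hf.mono_step (x := P j.succ) (y := P j.castSucc) (c := σ.symm j)
      (by rw [hsucc, hc]; rfl) (by rw [hcast, hc]) (fun i hi => (hother j i hi).symm) h2
    rw [h1] at this; simp at this
  have hD : ∀ j, D j → P 0 (σ.symm j) = true := by
    rintro j ⟨h1, h2⟩
    by_contra hc
    rw [Bool.not_eq_true] at hc
    have := hf.mono_step (x := P j.castSucc) (y := P j.succ) (c := σ.symm j)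
      (by rw [hcast, hc]) (by rw [hsucc, hc]; rfl) (fun i hi => hother j i hi) h1
    rw [h2] at this; simp at this
  let u : ℕ → ℕ := fun i => (univ.filter fun j : Fin n => j.val < i ∧ U j).card
  let d : ℕ → ℕ := fun i => (univ.filter fun j : Fin n => j.val < i ∧ D j).card
  -- Upward minus downward jumps before time `i` telescopes to the change of colour.
  have htel : ∀ i : Fin (n+1), u i.val + h 0 = d i.val + h i := by
    intro i
    induction i using Fin.induction with
    | zero => simp [u, d]
    | succ j ih =>
      have e1 : u (j.val + 1) = u j.val + if U j then 1 else 0 := card_filter_lt_succ U j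
      have e2 : d (j.val + 1) = d j.val + if D j then 1 else 0 := card_filter_lt_succ D j
      have e3 : h j.castSucc + (if U j then 1 else 0) = h j.succ + if D j then 1 else 0 := by
        simp only [h, U, D]
        cases f (P j.castSucc) <;> cases f (P j.succ) <;> simp
      simp only [Fin.val_succ, Fin.val_castSucc] at ih ⊢
      omega
  have hends : h 0 + h (Fin.last n) = 1 := by
    have e : P (Fin.last n) = fun i => !(P 0 i) := by
      funext i; rw [happ]; simp
    simp only [h, e, hf.antipode]
    cases f (P 0) <;> simp
  have htot : jumps f P = u n + d n := by
    have hdisj : Disjoint (univ.filter fun j : Fin n => j.val < n ∧ U j)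
        (univ.filter fun j : Fin n => j.val < n ∧ D j) := by
      rw [disjoint_filter]
      rintro j - ⟨-, h1, -⟩ ⟨-, h2, -⟩
      rw [h1] at h2; simp at h2
    rw [jumps, ← card_union_of_disjoint hdisj]
    congr 1
    ext j
    simp only [mem_filter, mem_univ, true_and, mem_union, j.isLt, U, D]
    cases f (P j.castSucc) <;> cases f (P j.succ) <;> simp
  -- Splitting the jumps of one direction by whether they occur before time `i`.
  have hsplit : ∀ (p : Fin n → Prop) [DecidablePred p] (i : ℕ),
      (univ.filter fun j : Fin n => j.val < n ∧ p j).card =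
        (univ.filter fun j : Fin n => j.val < i ∧ p j).card +
        (univ.filter fun j : Fin n => ¬ j.val < i ∧ p j).card := by
    intro p _ i
    rw [← card_union_of_disjoint]
    · congr 1
      ext j
      simp only [mem_filter, mem_univ, true_and, mem_union, j.isLt]
      tauto
    · rw [disjoint_filter]; tauto
  have hones : ∀ i : Fin (n+1), u i.val + d n ≤ d i.val + onesCount (P i) := by
    intro i
    have e := hsplit D i.val
    have hdisj : Disjoint (univ.filter fun j : Fin n => j.val < i.val ∧ U j)
        (univ.filter fun j : Fin n => ¬ j.val < i.val ∧ D j) := by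
      rw [disjoint_filter]; tauto
    have : ((univ.filter fun j : Fin n => j.val < i.val ∧ U j) ∪
        (univ.filter fun j : Fin n => ¬ j.val < i.val ∧ D j)).card ≤ onesCount (P i) := by
      refine card_le_card_of_injOn σ.symm ?_ σ.symm.injective.injOn
      intro j hj
      simp only [coe_union, coe_filter, mem_univ, true_and, Set.mem_union, Set.mem_ofPred_eq]
        at hj ⊢
      rw [happ]
      rcases hj with ⟨h1, h2⟩ | ⟨h1, h2⟩
      · simp [h1, hU j h2]
      · simp [h1, hD j h2]
    rw [card_union_of_disjoint hdisj] at this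
    simp only [u, d]
    omega
  have hzeros : ∀ i : Fin (n+1), d i.val + u n ≤ u i.val + zerosCount (P i) := by
    intro i
    have e := hsplit U i.val
    have hdisj : Disjoint (univ.filter fun j : Fin n => j.val < i.val ∧ D j)
        (univ.filter fun j : Fin n => ¬ j.val < i.val ∧ U j) := by
      rw [disjoint_filter]; tauto
    have : ((univ.filter fun j : Fin n => j.val < i.val ∧ D j) ∪
        (univ.filter fun j : Fin n => ¬ j.val < i.val ∧ U j)).card ≤ zerosCount (P i) := by
      refine card_le_card_of_injOn σ.symm ?_ σ.symm.injective.injOn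
      intro j hj
      simp only [coe_union, coe_filter, mem_univ, true_and, Set.mem_union, Set.mem_ofPred_eq]
        at hj ⊢
      rw [happ]
      rcases hj with ⟨h1, h2⟩ | ⟨h1, h2⟩
      · simp [h1, hD j h2]
      · simp [h1, hU j h2]
    rw [card_union_of_disjoint hdisj] at this
    simp only [u, d]
    omega
  by_contra hJ
  have hlast := htel (Fin.last n)
  simp only [Fin.val_last] at hlast
  -- Too many jumps force the whole geodesic into the middle region.
  have hmid : ∀ i : Fin (n+1), ¬ onesCount (P i) ≤ t ∧ ¬ zerosCount (P i) ≤ t := by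
    intro i
    have h1 := htel i
    have h2 := hones i
    have h3 := hzeros i
    have h4 : h i ≤ 1 := by simp only [h]; split <;> simp
    omega
  have hle : jumps f P ≤ k := by
    rw [jumps]
    calc _ ≤ (range k).card := by
          refine card_le_card_of_injOn (fun j => (σ.symm j).val) ?_ ?_
          · intro j hj
            simp only [coe_filter, mem_univ, true_and, Set.mem_ofPred_eq] at hj
            simp only [coe_range, Set.mem_Iio]
            by_contra hc
            refine hj (hf.congr_middle (hmid _).1 (hmid _).2 (hmid _).1 (hmid _).2 fun i hi => ?_)
            refine hother j i ?_
            rintro rfl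
            exact hc hi
          · intro a _ b _ hab
            exact σ.symm.injective (Fin.ext hab)
      _ = k := card_range k
  omega

/-! ### The lower bound -/

/-- The point reached after `j` steps when the entries are flipped in increasing order, starting
from the point whose ones are at the odd positions below `2t + 1`. -/
def altPoint (n t j : ℕ) (i : Fin n) : Bool :=
  xor (decide (i.val % 2 = 1 ∧ i.val ≤ 2 * t)) (decide (i.val < j))

/-- The permutation exchanging positions `2i` and `2i + 1` whenever `2i < k`. -/
def pairSwap (n k : ℕ) (heven : Even k) (hkn : k ≤ n) : Equiv.Perm (Fin n) :=
  Function.Involutive.toPerm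
    (fun i => if h : i.val < k then
      (if h2 : i.val % 2 = 0 then ⟨i.val + 1, by grind⟩ else ⟨i.val - 1, by omega⟩) else i)
    (by
      intro i
      ext
      grind)

lemma pairSwap_val {n k : ℕ} (heven : Even k) (hkn : k ≤ n) (i : Fin n) :
    (pairSwap n k heven hkn i).val =
      if i.val < k then (if i.val % 2 = 0 then i.val + 1 else i.val - 1) else i.val := by
  change (dite _ _ _ : Fin n).val = _
  split_ifs <;> rfl

lemma onesCount_comp {n : ℕ} (x : Fin n → Bool) (τ : Equiv.Perm (Fin n)) :
    onesCount (fun i => x (τ i)) = onesCount x := by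
  refine card_bij (fun i _ => τ i) (by simp) (fun a _ b _ h => τ.injective h) ?_
  intro b hb
  exact ⟨τ.symm b, by simpa using hb, by simp⟩

lemma zerosCount_comp {n : ℕ} (x : Fin n → Bool) (τ : Equiv.Perm (Fin n)) :
    zerosCount (fun i => x (τ i)) = zerosCount x := by
  have h1 := onesCount_add_zerosCount x
  have h2 := onesCount_add_zerosCount (fun i => x (τ i))
  rw [onesCount_comp] at h2
  omega

lemma firstOnes_comp {n k : ℕ} (x : Fin n → Bool) (τ : Equiv.Perm (Fin n))
    (hτ : ∀ i, (τ i).val < k ↔ i.val < k) :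
    firstOnes k (fun i => x (τ i)) = firstOnes k x := by
  refine card_bij (fun i _ => τ i) (by simp [hτ]) (fun a _ b _ h => τ.injective h) ?_
  intro b hb
  refine ⟨τ.symm b, ?_, by simp⟩
  have := hτ (τ.symm b)
  simp only [Equiv.apply_symm_apply] at this
  simpa [← this] using hb

lemma onesCount_altPoint_even {n t s : ℕ} (hs : s ≤ t) :
    onesCount (altPoint n t (2 * s)) ≤ t := by
  calc onesCount (altPoint n t (2 * s)) ≤ (range t).card := by
        refine card_le_card_of_injOn (fun i => i.val / 2) ?_ ?_
        · intro i hi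
          simp only [altPoint, coe_range, Set.mem_Iio] at hi ⊢
          grind
        · intro a ha b hb hab
          simp only [altPoint] at ha hb hab
          ext
          grind
    _ = t := card_range t

lemma onesCount_altPoint_succ_le {n t j : ℕ} :
    onesCount (altPoint n t (j + 1)) ≤ onesCount (altPoint n t j) + 1 := by
  by_cases hj : j < n
  · refine le_trans (card_le_card (t := insert ⟨j, hj⟩
      (univ.filter fun i => altPoint n t j i = true)) ?_) (card_insert_le _ _)
    intro i
    simp only [altPoint, mem_insert, Fin.ext_iff]
    grind
  · refine le_trans (card_le_card ?_) (Nat.le_succ _)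
    intro i
    simp only [altPoint]
    grind

/-- Among the first `b` positions the point reached after `2s + 1` steps has more than `m` ones: the
even positions up to `2s` and the odd positions between `2s` and `2m`.  Taking `b = n`, `m = t` gives
a bound on the total number of ones, and `b = k = 2m` one on the first `k` entries. -/
lemma lt_card_altPoint_odd {n t s m b : ℕ} (hs : s ≤ m) (hm : m ≤ t) (hb : b ≤ n)
    (hsb : 2 * s < b) (hmb : 2 * m ≤ b) :
    m < (univ.filter fun i : Fin n => i.val < b ∧ altPoint n t (2 * s + 1) i = true).card := by
  have key : (range (m + 1)).card ≤
      (univ.filter fun i : Fin n => i.val < b ∧ altPoint n t (2 * s + 1) i = true).card := by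
    refine card_le_card_of_injOn
      (fun a => if h : (if a ≤ s then 2 * a else 2 * a - 1) < n then
        (⟨if a ≤ s then 2 * a else 2 * a - 1, h⟩ : Fin n) else ⟨0, by omega⟩) ?_ ?_
    · intro a ha
      simp only [coe_range, Set.mem_Iio] at ha
      have h : (if a ≤ s then 2 * a else 2 * a - 1) < n := by split_ifs <;> omega
      simp only [h, dif_pos, altPoint]
      grind
    · intro a ha c hc hac
      simp only [coe_range, Set.mem_Iio] at ha hc
      have h : (if a ≤ s then 2 * a else 2 * a - 1) < n := by split_ifs <;> omega
      have h' : (if c ≤ s then 2 * c else 2 * c - 1) < n := by split_ifs <;> omega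
      simp only [h, h', dif_pos, Fin.mk.injEq] at hac
      grind
  simpa using key

lemma onesCount_altPoint_odd {n t s : ℕ} (hs : s ≤ t) (hn : 2 * t + 1 ≤ n) :
    ¬ onesCount (altPoint n t (2 * s + 1)) ≤ t := by
  have := lt_card_altPoint_odd (n := n) hs le_rfl (le_refl n) (by omega) (by omega)
  simpa [onesCount] using this

/-- One of the two flip orders gives colour `1` to the first point after time `k`. -/
lemma exists_order {n t k : ℕ} {f : (Fin n → Bool) → Bool} (heven : Even k)
    (hk2t : k ≤ 2 * t + 1) (hn : 2 * t + 1 ≤ n) (hf : MajClass t k f) :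
    ∃ τ : Equiv.Perm (Fin n), (∀ i, (τ i).val < k ↔ i.val < k) ∧
      f (fun i => altPoint n t (k + 1) (τ i)) = true := by
  have hkn : k ≤ n := by omega
  by_cases h0 : zerosCount (altPoint n t (k + 1)) ≤ t
  · exact ⟨1, by simp, hf.2.1 _ h0⟩
  have h1 : ¬ onesCount (altPoint n t (k + 1)) ≤ t := by
    obtain ⟨m, rfl⟩ := heven.two_dvd
    exact onesCount_altPoint_odd (by omega) hn
  have hne := hf.2.2.2 (altPoint n t (k + 1))
    (fun i => altPoint n t (k + 1) (pairSwap n k heven hkn i)) h1 h0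
    (by rwa [onesCount_comp]) (by rwa [zerosCount_comp]) (by
      intro i hi
      simp only [altPoint, pairSwap_val]
      grind)
  by_cases hv : f (altPoint n t (k + 1)) = true
  · exact ⟨1, by simp, hv⟩
  · refine ⟨pairSwap n k heven hkn, ?_, ?_⟩
    · intro i
      rw [pairSwap_val]
      grind
    · revert hne hv
      cases f (altPoint n t (k + 1)) <;> simp

lemma exists_geodesic {n t k : ℕ} {f : (Fin n → Bool) → Bool} (heven : Even k)
    (hk2t : k ≤ 2 * t + 1) (hn : 2 * t + 1 ≤ n) (hf : MajClass t k f) :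
    ∃ P : Fin (n+1) → Fin n → Bool, IsGeodesic P ∧ 2 * t + 1 ≤ jumps f P := by
  obtain ⟨τ, hτ, hτf⟩ := exists_order heven hk2t hn hf
  obtain ⟨m, rfl⟩ := heven.two_dvd
  have hlow : ∀ s ≤ t, f (fun i => altPoint n t (2 * s) (τ i)) = false := fun s hs =>
    hf.1 _ (by rw [onesCount_comp]; exact onesCount_altPoint_even hs)
  have hhigh : ∀ s ≤ t, f (fun i => altPoint n t (2 * s + 1) (τ i)) = true := by
    intro s hs
    by_cases h0 : zerosCount (altPoint n t (2 * s + 1)) ≤ t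
    · exact hf.2.1 _ (by rwa [zerosCount_comp])
    have h1 := onesCount_altPoint_odd hs hn
    by_cases hsm : s < m
    · refine (hf.2.2.1 _ (by rwa [onesCount_comp]) (by rwa [zerosCount_comp])).1 ?_
      rw [firstOnes_comp _ _ hτ]
      have := lt_card_altPoint_odd (n := n) (t := t) (b := 2 * m) hsm.le
        (by omega) (by omega) (by omega) le_rfl
      simp only [firstOnes]
      omega
    · -- After time `2m` the first `2m` entries no longer change.
      have h1' := onesCount_altPoint_odd (n := n) (t := t) (s := m) (by omega) hn
      have h0' : ¬ zerosCount (altPoint n t (2 * m + 1)) ≤ t := by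
        have e1 := onesCount_altPoint_even (n := n) (t := t) (s := m) (by omega)
        have e2 := onesCount_altPoint_succ_le (n := n) (t := t) (j := 2 * m)
        have e3 := onesCount_add_zerosCount (altPoint n t (2 * m + 1))
        have e4 := onesCount_add_zerosCount (altPoint n t (2 * s + 1))
        omega
      rw [← hτf]
      refine hf.congr_middle (by rwa [onesCount_comp]) (by rwa [zerosCount_comp])
        (by rwa [onesCount_comp]) (by rwa [zerosCount_comp]) fun i hi => ?_
      have := (hτ i).2 hi
      simp only [altPoint]
      grind
  refine ⟨fun j i => altPoint n t j.val (τ i), ⟨τ, fun j ℓ => ?_⟩, ?_⟩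
  · simp only [altPoint, Fin.val_succ, Fin.val_castSucc, Fin.ext_iff]
    grind
  · have hinj : (range (2 * t + 1)).card ≤ jumps f (fun j i => altPoint n t j.val (τ i)) := by
      refine card_le_card_of_injOn
        (fun a => if h : a < n then (⟨a, h⟩ : Fin n) else ⟨0, by omega⟩) ?_ ?_
      · intro a ha
        simp only [coe_range, Set.mem_Iio] at ha
        have h : a < n := by omega
        simp only [h, dif_pos, coe_filter, mem_univ, true_and, Set.mem_ofPred_eq, Fin.val_succ,
          Fin.val_castSucc]
        rcases Nat.even_or_odd' a with ⟨s, rfl | rfl⟩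
        · rw [hlow s (by omega), hhigh s (by omega)]; simp
        · rw [hhigh s (by omega), show 2 * s + 1 + 1 = 2 * (s + 1) by ring,
            hlow (s + 1) (by omega)]
          simp
      · intro a ha b hb hab
        simp only [coe_range, Set.mem_Iio] at ha hb
        have h : a < n := by omega
        have h' : b < n := by omega
        simpa [h, h'] using hab
    simpa using hinj

/-- For `k` even with `0 < k ≤ 2t+1 ≤ n`, every colouring `f` in the class `maj_t(k)`
has instability exactly `2t+1`. -/
theorem inst_majClass_eq (n t k : ℕ) (heven : Even k) (hk : 0 < k) (hk2t : k ≤ 2 * t + 1)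
    (hn : 2 * t + 1 ≤ n) (f : (Fin n → Bool) → Bool) (hf : MajClass t k f) :
    inst f = 2 * t + 1 := by
  obtain ⟨P, hP, hJ⟩ := exists_geodesic heven hk2t hn hf
  have hgreatest : IsGreatest {m | ∃ P : Fin (n+1) → Fin n → Bool, IsGeodesic P ∧ m = jumps f P}
      (2 * t + 1) := by
    refine ⟨⟨P, hP, le_antisymm hJ (jumps_le hk2t hf hP)⟩, ?_⟩
    rintro _ ⟨Q, hQ, rfl⟩
    exact jumps_le hk2t hf hQ
  exact hgreatest.csSup_eq
end

section
/- For each t in {0, 1, 2}, every colouring f of H_{2t+2} with t_f = t satisfies winst(f) >= 2t+1; that is, winst(2t+2, t) >= 2t+1 for t = 0, 1, 2. -/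
/-!
In `H_{2t+2}` the two balls of radius `t` fix every colour outside the middle layer, so `f` is an
arbitrary colouring of the `(t+1)`-element subsets of the coordinates. List the coordinates in some
order `π`, and let the windows be the `t+2` blocks of `t+1` consecutive coordinates in that order.
Each window is obtained from the previous one by dropping one coordinate and adding another, and
the last window is the complement of the first. A geodesic through all the windows is free to
choose whether it drops or adds first; dropping first after a window of colour `1` and adding first
after one of colour `0` loses a jump only where the colour changes between consecutive windows.
If the colours of the windows are nonincreasing, this happens at most once and the geodesic ends
well (`le_winst_of_antitone_windows`).

It remains to find an order with nonincreasing window colours for `t = 0, 1, 2`. If there is none,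
complementary sets have equal colours: a complementary pair with different colours, read from
colour `1` to colour `0`, leaves room only for the intermediate windows to fail, which is impossible
for `t = 1` and determines the colours of too many other sets for `t = 2`. So it is enough to find
an order with all colours equal.
For `t = 0`, the two windows are complementary. For `t = 1`, no order works only if any two
intersecting pairs have different colours, and three pairs out of three points cannot have pairwise
different colours. For `t = 2`, fix a point `o`; the
sets containing it correspond to the edges of `K_5` on the other five points, an order
`a, b, o, c, d, e` with equal colours is a monochromatic three-edge path `ab, bc, cd`, and every
2-colouring of the edges of `K_5` contains such a path (`no_mono_path_K5`).
-/

open Finset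

/-- `f` respects the balls `B_t(0^n)` and `B_t(1^n)`: it is `0` on all points with at
most `t` ones and `1` on all points with at most `t` zeros. -/
def Respects {n : ℕ} (t : ℕ) (f : (Fin n → Bool) → Bool) : Prop :=
  (∀ x, onesCount x ≤ t → f x = false) ∧ (∀ x, zerosCount x ≤ t → f x = true)

/-- `t_f = t`: `t` is the largest radius whose balls `f` respects. -/
def tfEq {n : ℕ} (f : (Fin n → Bool) → Bool) (t : ℕ) : Prop :=
  Respects t f ∧ ¬ Respects (t+1) f

/-- `winst t f`: the maximum number of jumps of `f` over all well-ending
`(t+1)`-geodesics (those starting with exactly `t+1` ones, whose first point has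
colour `1` or whose last point has colour `0`). -/
noncomputable def winst {n : ℕ} (t : ℕ) (f : (Fin n → Bool) → Bool) : ℕ :=
  sSup {m | ∃ P : Fin (n+1) → Fin n → Bool, IsGeodesic P ∧ onesCount (P 0) = t + 1 ∧
    (f (P 0) = true ∨ f (P (Fin.last n)) = false) ∧ m = jumps f P}

/-! ### Zigzag geodesics through windows -/

/-- The `i`-th window of the order `π`: the indicator of the coordinates in positions
`i, ..., i + t`. -/
def window {t : ℕ} (π : Equiv.Perm (Fin (2 * t + 2))) (i : ℕ) : Fin (2 * t + 2) → Bool :=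
  fun ℓ => decide (i ≤ (π.symm ℓ : ℕ) ∧ (π.symm ℓ : ℕ) < i + t + 1)

/-- The step of the zigzag geodesic at which the coordinate in position `p` changes. Steps `2i` and
`2i+1` drop position `i` and add position `t+1+i`, dropping first exactly when `c i` holds. -/
def flipTime (t : ℕ) (c : ℕ → Bool) (p : ℕ) : ℕ :=
  if p ≤ t then (if c p = true then 2 * p else 2 * p + 1)
  else (if c (p - (t + 1)) = true then 2 * (p - (t + 1)) + 1 else 2 * (p - (t + 1)))

lemma flipTime_lt {t : ℕ} (c : ℕ → Bool) {p : ℕ} (hp : p < 2 * t + 2) :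
    flipTime t c p < 2 * t + 2 := by
  unfold flipTime
  split_ifs <;> omega

lemma flipTime_inj {t : ℕ} (c : ℕ → Bool) {p q : ℕ}
    (h : flipTime t c p = flipTime t c q) : p = q := by
  unfold flipTime at h
  by_cases hp : p ≤ t <;> by_cases hq : q ≤ t <;> simp only [hp, hq, if_true, if_false] at h
  · split_ifs at h <;> omega
  · by_cases e : p = q - (t + 1)
    · rw [← e] at h
      split_ifs at h <;> omega
    · split_ifs at h <;> omega
  · by_cases e : q = p - (t + 1)
    · rw [← e] at h
      split_ifs at h <;> omega
    · split_ifs at h <;> omega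
  · split_ifs at h <;> omega

/-- `flipTime` as a permutation of the steps. -/
noncomputable def flipPerm (t : ℕ) (c : ℕ → Bool) : Equiv.Perm (Fin (2 * t + 2)) :=
  Equiv.ofBijective (fun p => ⟨flipTime t c p, flipTime_lt c p.2⟩)
    (Finite.injective_iff_bijective.1 fun p q h => by
      simp only [Fin.mk.injEq] at h
      exact Fin.ext (flipTime_inj c h))

/-- The zigzag geodesic through the windows of `π`. -/
def zigzag {t : ℕ} (π : Equiv.Perm (Fin (2 * t + 2))) (c : ℕ → Bool) (j : ℕ) :
    Fin (2 * t + 2) → Bool :=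
  fun ℓ => xor (decide ((π.symm ℓ : ℕ) ≤ t)) (decide (flipTime t c (π.symm ℓ) < j))

lemma zigzag_isGeodesic {t : ℕ} (π : Equiv.Perm (Fin (2 * t + 2))) (c : ℕ → Bool) :
    IsGeodesic (fun j : Fin (2 * t + 2 + 1) => zigzag π c j) := by
  refine ⟨π.symm.trans (flipPerm t c), fun j ℓ => ?_⟩
  have e : (π.symm.trans (flipPerm t c)) ℓ = j ↔ flipTime t c (π.symm ℓ) = j := by
    simp [flipPerm, Fin.ext_iff]
  simp only [e, zigzag, Fin.val_succ, Fin.val_castSucc]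
  by_cases h : flipTime t c (π.symm ℓ) = j
  · simp [h]
  · have : flipTime t c (π.symm ℓ) < j + 1 ↔ flipTime t c (π.symm ℓ) < j := by omega
    simp [h, this]

lemma zigzag_even {t : ℕ} (π : Equiv.Perm (Fin (2 * t + 2))) (c : ℕ → Bool) {i : ℕ}
    (hi : i ≤ t + 1) : zigzag π c (2 * i) = window π i := by
  funext ℓ
  unfold zigzag window
  generalize π.symm ℓ = p
  have hp := p.2
  rw [Bool.eq_iff_iff, Bool.xor_iff_ne, ne_eq, decide_eq_decide, decide_eq_true_eq]
  unfold flipTime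
  split_ifs <;> omega

lemma zigzag_odd_true {t : ℕ} (π : Equiv.Perm (Fin (2 * t + 2))) (c : ℕ → Bool) {i : ℕ}
    (hi : i ≤ t) (hc : c i = true) (ℓ : Fin (2 * t + 2)) :
    zigzag π c (2 * i + 1) ℓ = true ↔
      (π.symm ℓ : ℕ) ∈ Finset.Ico (i + 1) (i + t + 1) := by
  unfold zigzag
  generalize π.symm ℓ = p
  have hp := p.2
  rw [Bool.xor_iff_ne, ne_eq, decide_eq_decide, Finset.mem_Ico]
  unfold flipTime
  by_cases e : (p : ℕ) = i
  · simp only [e, hc, if_true]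
    split_ifs <;> omega
  by_cases e' : (p : ℕ) - (t + 1) = i
  · simp only [e', hc, if_true]
    split_ifs <;> omega
  split_ifs <;> omega

lemma zigzag_odd_false {t : ℕ} (π : Equiv.Perm (Fin (2 * t + 2))) (c : ℕ → Bool) {i : ℕ}
    (hi : i ≤ t) (hc : c i = false) (ℓ : Fin (2 * t + 2)) :
    zigzag π c (2 * i + 1) ℓ = false ↔
      (π.symm ℓ : ℕ) ∈ Finset.range i ∪ Finset.Ico (i + t + 2) (2 * t + 2) := by
  unfold zigzag
  generalize π.symm ℓ = p
  have hp := p.2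
  rw [← Bool.not_eq_true, Bool.xor_iff_ne, ne_eq, decide_eq_decide, Finset.mem_union,
    Finset.mem_range, Finset.mem_Ico]
  unfold flipTime
  by_cases e : (p : ℕ) = i
  · simp only [e, hc, Bool.false_eq_true, if_false]
    split_ifs <;> omega
  by_cases e' : (p : ℕ) - (t + 1) = i
  · simp only [e', hc, Bool.false_eq_true, if_false]
    split_ifs <;> omega
  split_ifs <;> omega

lemma card_filter_symm_mem_le {n : ℕ} (π : Equiv.Perm (Fin n)) (s : Finset ℕ) :
    (univ.filter fun ℓ : Fin n => (π.symm ℓ : ℕ) ∈ s).card ≤ s.card :=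
  Finset.card_le_card_of_injOn (fun ℓ => (π.symm ℓ : ℕ)) (fun ℓ h => by simpa using h)
    (fun a _ b _ h => π.symm.injective (Fin.ext h))

lemma onesCount_window_zero {t : ℕ} (π : Equiv.Perm (Fin (2 * t + 2))) :
    onesCount (window π 0) = t + 1 := by
  have : (univ.filter fun ℓ => window π 0 ℓ = true)
      = (univ.filter fun p : Fin (2 * t + 2) => (p : ℕ) < t + 1).map π.toEmbedding := by
    ext ℓ
    simp [window, Finset.mem_map_equiv]
  rw [onesCount, this, Finset.card_map, Fin.card_filter_val_lt]
  omega

/-- After a window of colour `c i` the zigzag geodesic moves to the layer, above or below the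
middle one, of the opposite colour. -/
lemma color_zigzag_odd {t : ℕ} {f : (Fin (2 * t + 2) → Bool) → Bool} (hf : Respects t f)
    (π : Equiv.Perm (Fin (2 * t + 2))) (c : ℕ → Bool) {i : ℕ} (hi : i ≤ t) :
    f (zigzag π c (2 * i + 1)) = !(c i) := by
  cases hc : c i
  · refine hf.2 _ ?_
    simp only [zerosCount, zigzag_odd_false π c hi hc]
    refine (card_filter_symm_mem_le π _).trans ((Finset.card_union_le _ _).trans ?_)
    simp only [Finset.card_range, Nat.card_Ico]
    omega
  · refine hf.1 _ ?_
    simp only [onesCount, zigzag_odd_true π c hi hc]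
    refine (card_filter_symm_mem_le π _).trans ?_
    simp only [Nat.card_Ico]
    omega

theorem le_winst_of_antitone_windows {t : ℕ} {f : (Fin (2 * t + 2) → Bool) → Bool}
    (hf : Respects t f) (π : Equiv.Perm (Fin (2 * t + 2)))
    (hm : ∀ i ≤ t, f (window π (i + 1)) = true → f (window π i) = true) :
    2 * t + 1 ≤ winst t f := by
  set c : ℕ → Bool := fun i => f (window π i) with hcdef
  have hanti : ∀ i j, i ≤ j → j ≤ t + 1 → c j = true → c i = true := by
    intro i j hij
    induction j, hij using Nat.le_induction with
    | base => exact fun _ h => h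
    | succ j _ ih => exact fun hj h => ih (by omega) (hm j (by omega) h)
  have heven : ∀ i ≤ t + 1, f (zigzag π c (2 * i)) = c i := fun i hi => by
    rw [zigzag_even π c hi]
  have hodd : ∀ i ≤ t, f (zigzag π c (2 * i + 1)) = !(c i) := fun i hi =>
    color_zigzag_odd hf π c hi
  -- A step without a jump is the second half of the passage from the last window of colour `1` to
  -- the first window of colour `0`.
  have hbad : ∀ j : ℕ, j < 2 * t + 2 → f (zigzag π c (j + 1)) = f (zigzag π c j) →
      ∃ i ≤ t, j = 2 * i + 1 ∧ c i = true ∧ c (i + 1) = false := by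
    intro j hj h
    obtain ⟨i, rfl | rfl⟩ : ∃ i, j = 2 * i ∨ j = 2 * i + 1 := ⟨j / 2, by omega⟩
    · rw [hodd i (by omega), heven i (by omega)] at h
      cases hc : c i <;> simp [hc] at h
    · rw [show 2 * i + 1 + 1 = 2 * (i + 1) by ring, hodd i (by omega), heven (i + 1) (by omega)] at h
      refine ⟨i, by omega, rfl, ?_⟩
      cases hc : c i
      · rw [hc] at h
        have := hanti i (i + 1) (by omega) (by omega) h
        simp [hc] at this
      · exact ⟨rfl, by simpa [hc] using h⟩
  have hjumps : 2 * t + 1 ≤ jumps f (fun j : Fin (2 * t + 2 + 1) => zigzag π c j) := by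
    simp only [jumps]
    have hsplit := Finset.card_filter_add_card_filter_not (s := (univ : Finset (Fin (2 * t + 2))))
      (fun j : Fin (2 * t + 2) => f (zigzag π c j.succ) ≠ f (zigzag π c j.castSucc))
    have hone : (univ.filter fun j : Fin (2 * t + 2) =>
        ¬ f (zigzag π c j.succ) ≠ f (zigzag π c j.castSucc)).card ≤ 1 := by
      refine Finset.card_le_one.2 fun a ha b hb => Fin.ext ?_
      simp only [mem_filter, mem_univ, true_and, not_not, Fin.val_succ, Fin.val_castSucc] at ha hb
      obtain ⟨i, hi, ea, h1, h2⟩ := hbad a a.2 ha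
      obtain ⟨k, hk, eb, h3, h4⟩ := hbad b b.2 hb
      rcases lt_trichotomy i k with h | h | h
      · have := hanti (i + 1) k h (by omega) h3
        simp [h2] at this
      · omega
      · have := hanti (k + 1) i h (by omega) h1
        simp [h4] at this
    rw [Finset.card_univ, Fintype.card_fin] at hsplit
    omega
  refine hjumps.trans (le_csSup ⟨2 * t + 2, ?_⟩ ⟨_, zigzag_isGeodesic π c, ?_, ?_, rfl⟩)
  · rintro m ⟨P, -, -, -, rfl⟩
    exact (Finset.card_filter_le _ _).trans (by simp)
  · have := zigzag_even π c (Nat.zero_le (t + 1))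
    simp only [Fin.val_zero, mul_zero] at this ⊢
    rw [this, onesCount_window_zero]
  · have h0 : f (zigzag π c 0) = c 0 := heven 0 (by omega)
    have h1 : f (zigzag π c (2 * t + 2)) = c (t + 1) := heven (t + 1) le_rfl
    simp only [Fin.val_zero, Fin.val_last, h0, h1]
    cases h : c (t + 1)
    · exact Or.inr rfl
    · exact Or.inl (hanti 0 (t + 1) (by omega) le_rfl h)

/-! ### Orders with nonincreasing window colours -/

lemma exists_perm {n : ℕ} (v : Fin n → Fin n) (hv : Function.Injective v) :
    ∃ π : Equiv.Perm (Fin n), ∀ p, π p = v p :=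
  ⟨Equiv.ofBijective v (Finite.injective_iff_bijective.1 hv), fun _ => rfl⟩

lemma window_eq {t : ℕ} (π : Equiv.Perm (Fin (2 * t + 2))) (i : ℕ)
    (Q : Fin (2 * t + 2) → Prop) [DecidablePred Q]
    (h : ∀ p : Fin (2 * t + 2), (i ≤ (p : ℕ) ∧ (p : ℕ) < i + t + 1) ↔ Q (π p)) :
    window π i = fun ℓ => decide (Q ℓ) := by
  funext ℓ
  have := h (π.symm ℓ)
  rw [Equiv.apply_symm_apply] at this
  exact decide_eq_decide.2 this

theorem le_winst_zero {f : (Fin (2 * 0 + 2) → Bool) → Bool} (hf : Respects 0 f) :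
    2 * 0 + 1 ≤ winst 0 f := by
  have e1 : window (t := 0) (Equiv.swap 0 1) 1 = window (t := 0) (Equiv.refl _) 0 := by decide
  by_cases h : f (window (t := 0) (Equiv.refl _) 0) = true
  · refine le_winst_of_antitone_windows hf (Equiv.refl _) fun i hi _ => ?_
    obtain rfl : i = 0 := by omega
    exact h
  · refine le_winst_of_antitone_windows hf (Equiv.swap 0 1) fun i hi h' => ?_
    obtain rfl : i = 0 := by omega
    exact absurd (e1 ▸ h') h

theorem le_winst_one {f : (Fin (2 * 1 + 2) → Bool) → Bool} (hf : Respects 1 f) :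
    2 * 1 + 1 ≤ winst 1 f := by
  by_contra hcon
  let G : Fin 4 → Fin 4 → Bool := fun a b => f fun ℓ => decide (ℓ = a ∨ ℓ = b)
  have hG : ∀ a b, G a b = G b a := fun a b => by
    simp only [G, or_comm]
  have H : ∀ a b c d : Fin 4, [a, b, c, d].Nodup →
      ¬ ((G b c = true → G a b = true) ∧ (G c d = true → G b c = true)) := by
    rintro a b c d hn ⟨h0, h1⟩
    obtain ⟨π, hπ⟩ := exists_perm (n := 2 * 1 + 2) ![a, b, c, d]
      (List.nodup_ofFn.1 (by simpa using hn))
    have q0 : a = π 0 := (hπ 0).symm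
    have q1 : b = π 1 := (hπ 1).symm
    have q2 : c = π 2 := (hπ 2).symm
    have q3 : d = π 3 := (hπ 3).symm
    have w0 : window (t := 1) π 0 = fun ℓ => decide (ℓ = a ∨ ℓ = b) := by
      rw [q0, q1]
      exact window_eq π _ _ (by simp only [π.injective.eq_iff]; decide)
    have w1 : window (t := 1) π 1 = fun ℓ => decide (ℓ = b ∨ ℓ = c) := by
      rw [q1, q2]
      exact window_eq π _ _ (by simp only [π.injective.eq_iff]; decide)
    have w2 : window (t := 1) π 2 = fun ℓ => decide (ℓ = c ∨ ℓ = d) := by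
      rw [q2, q3]
      exact window_eq π _ _ (by simp only [π.injective.eq_iff]; decide)
    refine hcon (le_winst_of_antitone_windows hf π fun i hi h => ?_)
    obtain rfl | rfl : i = 0 ∨ i = 1 := by omega
    · exact (congrArg f w0).trans (h0 ((congrArg f w1).symm.trans h))
    · exact (congrArg f w1).trans (h1 ((congrArg f w2).symm.trans h))
  have anti : ∀ a b c d : Fin 4, [a, b, c, d].Nodup → G a b = true → G c d = true := by
    intro a b c d hn h
    have := H a b c d hn
    clear * - this h
    grind
  have hne : ∀ a b c d : Fin 4, [a, b, c, d].Nodup → G a b ≠ G b c := by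
    intro a b c d hn h
    have h1 := H a b c d hn
    have h2 := anti c d a b (by clear * - hn; simp at hn ⊢; grind)
    clear * - h h1 h2
    grind
  have h1 := hne 0 1 2 3 (by decide)
  have h2 := hne 1 2 0 3 (by decide)
  have h3 := hne 2 0 1 3 (by decide)
  clear * - h1 h2 h3
  cases h : G 0 1 <;> cases h' : G 1 2 <;> cases h'' : G 2 0 <;> simp_all

/-- Every colouring `x` of the edges of the complete graph on the five points in the range of `p`
has a monochromatic path `a, b, c, d`; the fifth point `e` in `H` is the one off the path.
If `ab` and `bc` had the same colour, then the edges from `a` and `c` to the other two points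
`d`, `e` would all have the other colour and contain such a path; so any two edges at a point would
have different colours, which is impossible for three of them. -/
lemma no_mono_path_K5 {V : Type*} (x : V → V → Bool) (hx : ∀ a b, x a b = x b a)
    (p : Fin 5 → V) (hp : Function.Injective p)
    (H : ∀ a b c d e : V, [a, b, c, d, e].Nodup → (∀ v ∈ [a, b, c, d, e], v ∈ Set.range p) →
      ¬ (x a b = x b c ∧ x b c = x c d)) : False := by
  have H' : ∀ a b c d e : Fin 5, [a, b, c, d, e].Nodup →
      ¬ (x (p a) (p b) = x (p b) (p c) ∧ x (p b) (p c) = x (p c) (p d)) := by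
    intro a b c d e hn
    refine H _ _ _ _ (p e) (by simpa using hn.map hp) ?_
    simp
  have hne : ∀ a b c d e : Fin 5, [a, b, c, d, e].Nodup →
      x (p a) (p b) ≠ x (p b) (p c) := by
    intro a b c d e hn h
    have h1 := H' a b c d e hn
    have h2 := H' a b c e d (by clear * - hn; simp at hn ⊢; grind)
    have h3 := H' c b a d e (by clear * - hn; simp at hn ⊢; grind)
    have h4 := H' c b a e d (by clear * - hn; simp at hn ⊢; grind)
    have h5 := H' d a e c b (by clear * - hn; simp at hn ⊢; grind)
    have s1 := hx (p a) (p b)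
    have s2 := hx (p b) (p c)
    have s3 := hx (p a) (p d)
    have s4 := hx (p c) (p e)
    rw [← s1, ← s2] at h3 h4
    rw [← s3, ← s4] at h5
    clear * - h h1 h2 h3 h4 h5
    cases e : x (p a) (p b) <;> grind
  have h1 := hne 1 0 2 3 4 (by decide)
  have h2 := hne 1 0 3 2 4 (by decide)
  have h3 := hne 2 0 3 1 4 (by decide)
  rw [hx (p 1)] at h1 h2
  rw [hx (p 2)] at h3
  clear * - h1 h2 h3
  cases h : x (p 0) (p 1) <;> cases h' : x (p 0) (p 2) <;> cases h'' : x (p 0) (p 3) <;> simp_all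

theorem le_winst_two {f : (Fin (2 * 2 + 2) → Bool) → Bool} (hf : Respects 2 f) :
    2 * 2 + 1 ≤ winst 2 f := by
  by_contra hcon
  let G : Fin 6 → Fin 6 → Fin 6 → Bool := fun a b c => f fun ℓ => decide (ℓ = a ∨ ℓ = b ∨ ℓ = c)
  have hG : ∀ a b c, G a b c = G b a c := fun a b c => by
    simp only [G, or_left_comm]
  have hG' : ∀ a b c, G a b c = G a c b := fun a b c => by
    simp only [G]
    congr! 4
    exact or_comm
  have H : ∀ a b c d e g : Fin 6, [a, b, c, d, e, g].Nodup →
      ¬ ((G b c d = true → G a b c = true) ∧ (G c d e = true → G b c d = true) ∧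
        (G d e g = true → G c d e = true)) := by
    rintro a b c d e g hn ⟨h0, h1, h2⟩
    obtain ⟨π, hπ⟩ := exists_perm (n := 2 * 2 + 2) ![a, b, c, d, e, g]
      (List.nodup_ofFn.1 (by simpa using hn))
    have q0 : a = π 0 := (hπ 0).symm
    have q1 : b = π 1 := (hπ 1).symm
    have q2 : c = π 2 := (hπ 2).symm
    have q3 : d = π 3 := (hπ 3).symm
    have q4 : e = π 4 := (hπ 4).symm
    have q5 : g = π 5 := (hπ 5).symm
    have w0 : window (t := 2) π 0 = fun ℓ => decide (ℓ = a ∨ ℓ = b ∨ ℓ = c) := by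
      rw [q0, q1, q2]
      exact window_eq π _ _ (by simp only [π.injective.eq_iff]; decide)
    have w1 : window (t := 2) π 1 = fun ℓ => decide (ℓ = b ∨ ℓ = c ∨ ℓ = d) := by
      rw [q1, q2, q3]
      exact window_eq π _ _ (by simp only [π.injective.eq_iff]; decide)
    have w2 : window (t := 2) π 2 = fun ℓ => decide (ℓ = c ∨ ℓ = d ∨ ℓ = e) := by
      rw [q2, q3, q4]
      exact window_eq π _ _ (by simp only [π.injective.eq_iff]; decide)
    have w3 : window (t := 2) π 3 = fun ℓ => decide (ℓ = d ∨ ℓ = e ∨ ℓ = g) := by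
      rw [q3, q4, q5]
      exact window_eq π _ _ (by simp only [π.injective.eq_iff]; decide)
    refine hcon (le_winst_of_antitone_windows hf π fun i hi h => ?_)
    obtain rfl | rfl | rfl : i = 0 ∨ i = 1 ∨ i = 2 := by omega
    · exact (congrArg f w0).trans (h0 ((congrArg f w1).symm.trans h))
    · exact (congrArg f w1).trans (h1 ((congrArg f w2).symm.trans h))
    · exact (congrArg f w2).trans (h2 ((congrArg f w3).symm.trans h))
  -- If `abc` has colour `1` and its complement `deg` colour `0`, then every neighbour of `abc` has
  -- colour `0` and every neighbour of `deg` colour `1`.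
  have hnear : ∀ a b c d e g : Fin 6, [a, b, c, d, e, g].Nodup → G a b c = true →
      G d e g = false → G b c d = false ∧ G c d e = true := by
    intro a b c d e g hn h h'
    have := H a b c d e g hn
    clear * - h h' this
    grind
  -- Then `ecd`, `cdg`, `dga`, `gab` have colours `1`, `1`, `?`, `0`.
  have anti : ∀ a b c d e g : Fin 6, [a, b, c, d, e, g].Nodup → G a b c = true →
      G d e g = true := by
    intro a b c d e g hn h
    by_contra h'
    have h' : G d e g = false := by simpa using h'
    have r1 := (hnear a b c d e g hn h h').2
    have r2 := (hnear a b c d g e (by clear * - hn; simp at hn ⊢; grind) h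
      (by rw [← h', hG' d g e])).2
    have r3 := (hnear c a b g d e (by clear * - hn; simp at hn ⊢; grind)
      (by rw [← h, hG c a b, hG' a c b])
      (by rw [← h', hG g d e, hG' d g e])).1
    have r4 := H e c d g a b (by clear * - hn; simp at hn ⊢; grind)
    have s1 : G e c d = G c d e := by rw [hG e c d, hG' c e d]
    have s2 : G g a b = G a b g := by rw [hG g a b, hG' a g b]
    clear * - r1 r2 r3 r4 s1 s2
    grind
  -- With `0` as the common point, a monochromatic path `ab, bc, cd` contradicts the order
  -- `a, b, 0, c, d, e`, whose last window has the colour of its complement `{a, b, 0}`.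
  refine no_mono_path_K5 (G 0) (fun a b => hG' 0 a b) Fin.succ (Fin.succ_injective 5) ?_
  rintro a b c d e hn hr ⟨h1, h2⟩
  have h0 : ∀ v ∈ [a, b, c, d, e], v ≠ 0 := fun v hv => by
    obtain ⟨w, rfl⟩ := hr v hv
    exact Fin.succ_ne_zero w
  have hn' : [a, b, 0, c, d, e].Nodup := by
    clear * - hn h0
    simp at hn h0 ⊢
    grind
  have k1 := H a b 0 c d e hn'
  have k2 := anti c d e a b 0 (by clear * - hn'; simp at hn' ⊢; grind)
  have s1 : G a b 0 = G 0 a b := by rw [hG' a b 0, hG a 0 b]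
  have s2 : G b 0 c = G 0 b c := hG b 0 c
  clear * - h1 h2 k1 k2 s1 s2
  grind

/-- For `t ∈ {0,1,2}`, every colouring `f` of `H_{2t+2}` with `t_f = t` satisfies
`winst f ≥ 2t+1`; that is, `winst(2t+2,t) ≥ 2t+1` for `t = 0, 1, 2`. -/
theorem winst_base (t : ℕ) (ht : t ≤ 2) :
    ∀ f : (Fin (2 * t + 2) → Bool) → Bool, tfEq f t → 2 * t + 1 ≤ winst t f := by
  intro f hf
  interval_cases t
  · exact le_winst_zero hf.1
  · exact le_winst_one hf.1
  · exact le_winst_two hf.1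
end
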